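/- Fix integers m ≥ 1 and k ≥ 1. Then the base cases of the recursion for N' hold: N'_{1,k}(α,β) = α^k β ( β^k + α Σ_{ℓ=0}^{k−1} β^ℓ ) (the sum of weights of Condensed Catalan tableaux of shape (1,1,…,1) with k rows, of size (k, k+1)), and N'_{m,1}(α,β) = α β^m ( α^m + β Σ_{i=0}^{m−1} α^i ) (the sum of weights of Condensed Catalan tableaux of shape (m), of size (1, m+1)). Both identities hold in ℤ[α,β]. -/

import Mathlib

open scoped Classical
open Finset

/-- A Condensed Catalan tableau with `k` rows inside a rectangle of width `w`,
of shape `lam`: cells are `none` (empty), `some true` (an α) or `some false` (a β). -/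
def IsCCT (k w : ℕ) (lam : Fin k → ℕ) (F : Fin k → Fin w → Option Bool) : Prop :=
  (∀ (i : Fin k) (c : Fin w), lam i ≤ (c : ℕ) → F i c = none) ∧
  (∀ (i : Fin k) (c c' : Fin w), F i c = some false → c' < c → F i c' = none) ∧
  (∀ (i i' : Fin k) (c : Fin w), F i c = some true → i' < i → F i' c = none) ∧
  (∀ (i : Fin k) (c : Fin w), (c : ℕ) < lam i →
    (∀ i' : Fin k, i < i' → F i' c ≠ some true) →
    (∀ c' : Fin w, c < c' → (c' : ℕ) < lam i → F i c' ≠ some false) →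
    F i c ≠ none)

/-- The number of α's in the filling. -/
def aCount (k w : ℕ) (F : Fin k → Fin w → Option Bool) : ℕ :=
  (Finset.univ.filter fun p : Fin k × Fin w => F p.1 p.2 = some true).card

/-- The number of β's in the filling. -/
def bCount (k w : ℕ) (F : Fin k → Fin w → Option Bool) : ℕ :=
  (Finset.univ.filter fun p : Fin k × Fin w => F p.1 p.2 = some false).card

/-- The binomial coefficient `binom a b` for integer arguments, with the convention
that it vanishes whenever `b < 0` or `b > a`. -/
def icho (a b : ℤ) : ℤ := if 0 ≤ b ∧ b ≤ a then ((a.toNat).choose b.toNat : ℤ) else 0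

/-- `N'_{m,k}(α,β)`: the sum of weights of Condensed Catalan tableaux of size
`(k, k+m)` whose shape has first row exactly `m` and exactly `k` nonzero rows
(stated here for `m, k ≥ 1`), with `α = X 0`, `β = X 1`. -/
noncomputable def N'tab (m k : ℕ) : MvPolynomial (Fin 2) ℤ :=
  ∑ pr ∈ Finset.univ.filter
      (fun pr : (Fin k → Fin (m + 1)) × (Fin k → Fin m → Option Bool) =>
        (∀ i j : Fin k, i ≤ j → (pr.1 j : ℕ) ≤ (pr.1 i : ℕ)) ∧
        (∀ h : 0 < k, (pr.1 ⟨0, h⟩ : ℕ) = m) ∧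
        (∀ i : Fin k, 1 ≤ (pr.1 i : ℕ)) ∧
        IsCCT k m (fun i => (pr.1 i : ℕ)) pr.2),
    (MvPolynomial.X 0 : MvPolynomial (Fin 2) ℤ) ^ (k + aCount k m pr.2) *
      MvPolynomial.X 1 ^ (m + bCount k m pr.2)


def PP (n : ℕ) (b : Bool) (f : Fin n → Option Bool) : Prop :=
  (∀ c c' : Fin n, f c = some b → c' < c → f c' = none) ∧
  (∀ c : Fin n, (∀ c' : Fin n, c < c' → f c' ≠ some b) → f c ≠ none)

def gg (n : ℕ) (b : Bool) (t : ℕ) : Fin n → Option Bool := fun c =>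
  if (c : ℕ) + 1 < t then none else if (c : ℕ) + 1 = t then some b else some (!b)

lemma PP_gg (n : ℕ) (b : Bool) (t : ℕ) (ht : t ≤ n) : PP n b (gg n b t) := by
  refine ⟨?_, ?_⟩
  · intro c c' h hc
    have hc : (c' : ℕ) < c := hc
    unfold gg at *
    split_ifs at h with h1 h2
    · rw [if_pos (by omega)]
    · simp at h
  · intro c h
    by_cases h1 : (c : ℕ) + 1 < t
    · exfalso
      apply h ⟨t - 1, by omega⟩ (by show (c : ℕ) < t - 1; omega)
      unfold gg
      simp only
      rw [if_neg (by omega), if_pos (by omega)]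
    · unfold gg
      rw [if_neg h1]
      split_ifs <;> simp

lemma PP_iff (n : ℕ) (b : Bool) (f : Fin n → Option Bool) :
    PP n b f ↔ ∃ t ∈ Finset.range (n + 1), gg n b t = f := by
  constructor
  · rintro ⟨h1, h2⟩
    have key : ∀ c, f c ≠ none → f c ≠ some b → f c = some (!b) := by
      intro c
      rcases f c with _ | x
      · simp
      · cases x <;> cases b <;> simp
    by_cases h : ∃ c, f c = some b
    · obtain ⟨c, hc⟩ := h
      refine ⟨c + 1, by simp, ?_⟩
      funext d
      unfold gg
      split_ifs with h3 h4
      · exact (h1 c d hc (by show (d : ℕ) < c; omega)).symm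
      · have : d = c := Fin.ext (by omega)
        rw [this, hc]
      · have hb : ∀ e, c < e → f e ≠ some b := by
          intro e he h5
          have := h1 e c h5 he
          rw [hc] at this
          simp at this
        have hd : c < d := by show (c : ℕ) < d; omega
        exact (key d (h2 d fun e he => hb e (hd.trans he)) (hb d hd)).symm
    · push Not at h
      refine ⟨0, by simp, ?_⟩
      funext d
      have := key d (h2 d fun e _ => h e) (h d)
      simp [gg, this]
  · rintro ⟨t, ht, rfl⟩
    exact PP_gg n b t (by simp at ht; omega)

lemma card_stop (n : ℕ) (b : Bool) (t : ℕ) (ht : t ≤ n) :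
    (Finset.univ.filter fun c => gg n b t c = some b).card = if t = 0 then 0 else 1 := by
  split_ifs with h
  · subst h
    simp [gg]
  · rw [Finset.card_eq_one]
    refine ⟨⟨t - 1, by omega⟩, ?_⟩
    ext c
    rw [Finset.mem_filter]
    simp only [Finset.mem_univ, true_and, Finset.mem_singleton, Fin.ext_iff, gg]
    split_ifs with h1 h2
    · simp; omega
    · simp; omega
    · simp; omega

lemma card_other (n : ℕ) (b : Bool) (t : ℕ) (ht : t ≤ n) :
    (Finset.univ.filter fun c => gg n b t c = some (!b)).card = n - t := by
  have : ∀ c : Fin n, gg n b t c = some (!b) ↔ ¬ ((c : ℕ) < t) := by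
    intro c
    simp only [gg]
    split_ifs with h1 h2
    · simp; omega
    · simp; omega
    · simp; omega
  simp only [this]
  have h := Finset.card_filter_add_card_filter_not (s := (Finset.univ : Finset (Fin n)))
    (fun c => (c : ℕ) < t)
  have h3 : (Finset.univ.filter fun c : Fin n => (c : ℕ) < t).card = t := by
    rw [Fin.card_filter_val_lt]; omega
  rw [h3] at h
  simp at h ⊢
  omega

lemma gg_inj (n : ℕ) (b : Bool) (t t' : ℕ) (ht : t ≤ n) (ht' : t' ≤ n)
    (h : gg n b t = gg n b t') : t = t' := by
  have h1 := card_other n b t ht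
  rw [h, card_other n b t' ht'] at h1
  omega

lemma sum_gg {R : Type*} [CommRing R] (n : ℕ) (x y : R) :
    ∑ t ∈ Finset.range (n + 1), x ^ (if t = 0 then 0 else 1) * y ^ (n - t)
      = y ^ n + x * ∑ l ∈ Finset.range n, y ^ l := by
  rw [Finset.sum_range_succ', Finset.mul_sum, ← Finset.sum_range_reflect]
  simp only [if_true, pow_zero, one_mul, Nat.sub_zero]
  rw [add_comm]
  congr 1
  apply Finset.sum_congr rfl
  intro i hi
  simp at hi
  rw [if_neg (by omega), pow_one, ← Finset.mem_range] at *
  congr 2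
  simp at hi
  omega

lemma count_col (k : ℕ) (b : Bool) (F : Fin k → Fin 1 → Option Bool) :
    (Finset.univ.filter fun p : Fin k × Fin 1 => F p.1 p.2 = some b).card
      = (Finset.univ.filter fun i => F i 0 = some b).card := by
  simp only [Finset.card_filter, Fintype.sum_prod_type, Fin.sum_univ_one]

lemma count_row (m : ℕ) (b : Bool) (F : Fin 1 → Fin m → Option Bool) :
    (Finset.univ.filter fun p : Fin 1 × Fin m => F p.1 p.2 = some b).card
      = (Finset.univ.filter fun i => F 0 i = some b).card := by
  simp only [Finset.card_filter, Fintype.sum_prod_type]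
  simp

lemma col_set (k : ℕ) (hk : 1 ≤ k) (pr : (Fin k → Fin (1 + 1)) × (Fin k → Fin 1 → Option Bool)) :
    ((∀ i j : Fin k, i ≤ j → (pr.1 j : ℕ) ≤ (pr.1 i : ℕ)) ∧
        (∀ h : 0 < k, (pr.1 ⟨0, h⟩ : ℕ) = 1) ∧
        (∀ i : Fin k, 1 ≤ (pr.1 i : ℕ)) ∧
        IsCCT k 1 (fun i => (pr.1 i : ℕ)) pr.2) ↔
      ∃ t ∈ Finset.range (k + 1), ((fun _ => 1, fun i _ => gg k true t i) :
        (Fin k → Fin (1 + 1)) × (Fin k → Fin 1 → Option Bool)) = pr := by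
  obtain ⟨lam, F⟩ := pr
  constructor
  · rintro ⟨-, -, h3, -, -, h6, h7⟩
    simp only at h3 h6 h7
    have hP : PP k true (fun i => F i 0) := by
      refine ⟨fun c c' => h6 c c' 0, fun c h => h7 c 0 (h3 c) h ?_⟩
      intro c' hc'
      exact absurd hc' (by rw [Subsingleton.elim c' 0]; exact lt_irrefl _)
    obtain ⟨t, ht, h⟩ := (PP_iff k true _).1 hP
    refine ⟨t, ht, ?_⟩
    rw [Prod.mk.injEq]
    constructor
    · funext i
      apply Fin.ext
      have := h3 i
      have h' := (lam i).isLt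
      show 1 = _
      omega
    · funext i c
      rw [h, Subsingleton.elim c 0]
  · rintro ⟨t, ht, h⟩
    obtain ⟨rfl, rfl⟩ := Prod.mk.inj h
    obtain ⟨h1, h2⟩ := (PP_iff k true _).2 ⟨t, ht, rfl⟩
    refine ⟨by simp, by simp, by simp, ?_, ?_, ?_, ?_⟩
    · intro i c h
      simp at h
    · intro i c c' _ h
      exact absurd h (by rw [Subsingleton.elim c' c]; exact lt_irrefl _)
    · intro i i' c
      exact h1 i i'
    · intro i c _ h _
      exact h2 i h

lemma row_set (m : ℕ) (hm : 1 ≤ m) (pr : (Fin 1 → Fin (m + 1)) × (Fin 1 → Fin m → Option Bool)) :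
    ((∀ i j : Fin 1, i ≤ j → (pr.1 j : ℕ) ≤ (pr.1 i : ℕ)) ∧
        (∀ h : 0 < 1, (pr.1 ⟨0, h⟩ : ℕ) = m) ∧
        (∀ i : Fin 1, 1 ≤ (pr.1 i : ℕ)) ∧
        IsCCT 1 m (fun i => (pr.1 i : ℕ)) pr.2) ↔
      ∃ t ∈ Finset.range (m + 1), ((fun _ => Fin.last m, fun _ c => gg m false t c) :
        (Fin 1 → Fin (m + 1)) × (Fin 1 → Fin m → Option Bool)) = pr := by
  obtain ⟨lam, F⟩ := pr
  constructor
  · rintro ⟨-, h2, -, -, h5, -, h7⟩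
    have h2 : (lam 0 : ℕ) = m := h2 Nat.one_pos
    simp only at h5 h7
    have hP : PP m false (F 0) := by
      refine ⟨h5 0, fun c h => h7 0 c (by rw [h2]; exact c.isLt) ?_ fun c' hc _ => h c' hc⟩
      intro c' hc'
      exact absurd hc' (by rw [Subsingleton.elim c' 0]; exact lt_irrefl _)
    obtain ⟨t, ht, h⟩ := (PP_iff m false _).1 hP
    refine ⟨t, ht, ?_⟩
    rw [Prod.mk.injEq]
    constructor
    · funext i
      apply Fin.ext
      rw [Subsingleton.elim i 0, h2]
      rfl
    · funext i c
      rw [h, Subsingleton.elim i 0]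
  · rintro ⟨t, ht, h⟩
    obtain ⟨rfl, rfl⟩ := Prod.mk.inj h
    obtain ⟨h1, h2⟩ := (PP_iff m false _).2 ⟨t, ht, rfl⟩
    refine ⟨by simp, by simp, by simpa using hm, ?_, ?_, ?_, ?_⟩
    · intro i c h
      have := c.isLt
      simp at h
      omega
    · intro i c c'
      exact h1 c c'
    · intro i i' c _ h
      exact absurd h (by rw [Subsingleton.elim i' i]; exact lt_irrefl _)
    · intro i c _ _ h
      exact h2 c fun c' hc => h c' hc c'.isLt

lemma col_sum (k : ℕ) (hk : 1 ≤ k) : N'tab 1 k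
        = (MvPolynomial.X 0 : MvPolynomial (Fin 2) ℤ) ^ k * MvPolynomial.X 1 *
          (MvPolynomial.X 1 ^ k +
            MvPolynomial.X 0 * ∑ l ∈ Finset.range k, MvPolynomial.X 1 ^ l) := by
  unfold N'tab
  simp only [col_set k hk]
  rw [← sum_gg, Finset.mul_sum]
  symm
  apply Finset.sum_bij (fun t _ => ((fun _ => 1, fun i _ => gg k true t i) :
        (Fin k → Fin (1 + 1)) × (Fin k → Fin 1 → Option Bool)))
  · intro t ht
    rw [Finset.mem_filter]
    exact ⟨Finset.mem_univ _, t, ht, rfl⟩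
  · intro t ht t' ht' h
    have h := (Prod.mk.inj h).2
    simp only [Finset.mem_range] at ht ht'
    exact gg_inj k true t t' (by omega) (by omega) (funext fun i => congrFun (congrFun h i) 0)
  · intro pr hpr
    obtain ⟨t, ht, h⟩ := (Finset.mem_filter.1 hpr).2
    exact ⟨t, ht, h⟩
  · intro t ht
    simp only [Finset.mem_range] at ht
    have ha := card_stop k true t (by omega)
    have hb := card_other k true t (by omega)
    simp only [Bool.not_true] at hb
    simp only [aCount, bCount]
    have ha' := count_col k true (fun i _ => gg k true t i)
    have hb' := count_col k false (fun i _ => gg k true t i)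
    rw [ha', hb', ha, hb, pow_add, pow_add]
    ring

lemma row_sum (m : ℕ) (hm : 1 ≤ m) : N'tab m 1
        = (MvPolynomial.X 0 : MvPolynomial (Fin 2) ℤ) * MvPolynomial.X 1 ^ m *
          (MvPolynomial.X 0 ^ m +
            MvPolynomial.X 1 * ∑ i ∈ Finset.range m, MvPolynomial.X 0 ^ i) := by
  unfold N'tab
  simp only [row_set m hm]
  rw [← sum_gg, Finset.mul_sum]
  symm
  apply Finset.sum_bij (fun t _ => ((fun _ => Fin.last m, fun _ c => gg m false t c) :
        (Fin 1 → Fin (m + 1)) × (Fin 1 → Fin m → Option Bool)))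
  · intro t ht
    rw [Finset.mem_filter]
    exact ⟨Finset.mem_univ _, t, ht, rfl⟩
  · intro t ht t' ht' h
    have h := (Prod.mk.inj h).2
    simp only [Finset.mem_range] at ht ht'
    exact gg_inj m false t t' (by omega) (by omega) (congrFun h 0)
  · intro pr hpr
    obtain ⟨t, ht, h⟩ := (Finset.mem_filter.1 hpr).2
    exact ⟨t, ht, h⟩
  · intro t ht
    simp only [Finset.mem_range] at ht
    have ha := card_stop m false t (by omega)
    have hb := card_other m false t (by omega)
    simp only [Bool.not_false] at hb
    simp only [aCount, bCount]
    have ha' := count_row m true (fun _ i => gg m false t i)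
    have hb' := count_row m false (fun _ i => gg m false t i)
    rw [ha', hb', ha, hb, pow_add, pow_add]
    ring

/-- Base cases of the recursion for `N'`:
`N'_{1,k} = α^k β (β^k + α Σ_{ℓ=0}^{k-1} β^ℓ)` (tableaux of shape `(1,…,1)` with `k`
rows) and `N'_{m,1} = α β^m (α^m + β Σ_{i=0}^{m-1} α^i)` (tableaux of shape `(m)`). -/
theorem stmt12 (m k : ℕ) (hm : 1 ≤ m) (hk : 1 ≤ k) :
    N'tab 1 k
        = (MvPolynomial.X 0 : MvPolynomial (Fin 2) ℤ) ^ k * MvPolynomial.X 1 *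
          (MvPolynomial.X 1 ^ k +
            MvPolynomial.X 0 * ∑ l ∈ Finset.range k, MvPolynomial.X 1 ^ l) ∧
    N'tab m 1
        = (MvPolynomial.X 0 : MvPolynomial (Fin 2) ℤ) * MvPolynomial.X 1 ^ m *
          (MvPolynomial.X 0 ^ m +
            MvPolynomial.X 1 * ∑ i ∈ Finset.range m, MvPolynomial.X 0 ^ i) := by
  exact ⟨col_sum k hk, row_sum m hm⟩
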